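/- Suppose instead that the edge probability p = p(n) satisfies q(log n + ω(n))/(α_min n) ≤ p ≤ 1, where ω(n) → ∞ and α_min = min{α_i : i ∈ [q]}. Then with high probability the perfect matching color profile of G consists of all vectors: for every vector (m_1,…,m_q) of nonnegative integers with m_1+⋯+m_q = n there exists a perfect matching M of G with |M ∩ Q_i| = m_i for all i ∈ [q]. -/

import Mathlib

open MeasureTheory Filter Finset Asymptotics

/-- Discrete measurable structure on edge states: `none` = non-edge, `some i` = edge of color `cᵢ`. -/
instance (q : ℕ) : MeasurableSpace (Option (Fin q)) := ⊤

/-- Distribution of the state of a single pair: non-edge with probability `1-p`,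
an edge of color `cᵢ` with probability `αᵢ·p`. -/
noncomputable def colorM (q : ℕ) (α : Fin q → ℝ) (p : ℝ) : Measure (Option (Fin q)) :=
  ENNReal.ofReal (1 - p) • Measure.dirac none +
    ∑ i : Fin q, ENNReal.ofReal (α i * p) • Measure.dirac (some i)

/-- The randomly colored random bipartite graph on parts `A = B = Fin n`:
independently, each pair `(a,b)` is a non-edge with probability `1-p` and an
edge of color `cᵢ` with probability `αᵢ·p`.  A sample is a function
`f : Fin n × Fin n → Option (Fin q)`. -/
noncomputable def graphM (n q : ℕ) (α : Fin q → ℝ) (p : ℝ) :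
    Measure (Fin n × Fin n → Option (Fin q)) :=
  Measure.pi fun _ => colorM q α p


lemma colorM_prob (q : ℕ) (α : Fin q → ℝ) (hα : ∀ i, 0 < α i) (hsum : ∑ i, α i = 1)
    (p : ℝ) (hp0 : 0 ≤ p) (hp1 : p ≤ 1) : IsProbabilityMeasure (colorM q α p) := by
  constructor
  have h : ∀ i ∈ (univ : Finset (Fin q)), 0 ≤ α i * p :=
    fun i _ => mul_nonneg (hα i).le hp0
  simp only [colorM, Measure.add_apply, Measure.smul_apply, Measure.finsetSum_apply,
    measure_univ, smul_eq_mul, mul_one]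
  rw [← ENNReal.ofReal_sum_of_nonneg h, ← ENNReal.ofReal_add (by linarith)
    (Finset.sum_nonneg h), ← Finset.sum_mul, hsum]
  simp

lemma colorM_some (q : ℕ) (α : Fin q → ℝ) (p : ℝ) (i : Fin q) :
    colorM q α p {some i} = ENNReal.ofReal (α i * p) := by
  simp only [colorM, Measure.add_apply, Measure.smul_apply, Measure.finsetSum_apply,
    smul_eq_mul]
  rw [Finset.sum_eq_single i]
  · simp
  · intro b _ hb
    simp [hb]
  · simp

lemma colorM_not (q : ℕ) (α : Fin q → ℝ) (hα : ∀ i, 0 < α i) (hsum : ∑ i, α i = 1)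
    (p : ℝ) (hp0 : 0 ≤ p) (hp1 : p ≤ 1) (a0 : ℝ) (i : Fin q) (ha : a0 ≤ α i) :
    colorM q α p {some i}ᶜ ≤ ENNReal.ofReal (Real.exp (-(a0 * p))) := by
  have := colorM_prob q α hα hsum p hp0 hp1
  rw [prob_compl_eq_one_sub (MeasurableSpace.measurableSet_top), colorM_some,
    ← ENNReal.ofReal_one, ← ENNReal.ofReal_sub _ (mul_nonneg (hα i).le hp0)]
  apply ENNReal.ofReal_le_ofReal
  have h1 := Real.add_one_le_exp (-(a0 * p))
  have h2 := mul_le_mul_of_nonneg_right ha hp0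
  linarith

lemma cyl (n q : ℕ) (α : Fin q → ℝ) (hα : ∀ i, 0 < α i) (hsum : ∑ i, α i = 1)
    (p : ℝ) (hp0 : 0 ≤ p) (hp1 : p ≤ 1) (a0 : ℝ) (ha : ∀ i, a0 ≤ α i)
    (col : Fin n × Fin n → Fin q) (X Y : Finset (Fin n × Fin n)) (hXY : Disjoint X Y) :
    graphM n q α p {f | (∀ e ∈ X, f e ≠ some (col e)) ∧ ∀ e ∈ Y, f e = some (col e)} ≤
      ENNReal.ofReal (Real.exp (-(a0 * p))) ^ X.card * ENNReal.ofReal p ^ Y.card := by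
  have := colorM_prob q α hα hsum p hp0 hp1
  have hset : {f : Fin n × Fin n → Option (Fin q) |
      (∀ e ∈ X, f e ≠ some (col e)) ∧ ∀ e ∈ Y, f e = some (col e)} =
      Set.univ.pi (fun e => {s | (e ∈ X → s ≠ some (col e)) ∧ (e ∈ Y → s = some (col e))}) := by
    ext f
    simp only [Set.mem_ofPred_eq, Set.mem_pi, Set.mem_univ, true_imp_iff]
    exact forall_and.symm
  rw [hset, graphM, Measure.pi_pi]
  calc _ ≤ ∏ e : Fin n × Fin n, ((if e ∈ X then ENNReal.ofReal (Real.exp (-(a0 * p))) else 1) *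
          (if e ∈ Y then ENNReal.ofReal p else 1)) := by
        apply Finset.prod_le_prod'
        intro e _
        by_cases hX : e ∈ X
        · have hY : e ∉ Y := Finset.disjoint_left.mp hXY hX
          simp only [hX, hY, if_true, if_false, mul_one, true_imp_iff, false_imp_iff, and_true]
          exact colorM_not q α hα hsum p hp0 hp1 a0 _ (ha _)
        · by_cases hY : e ∈ Y
          · simp only [hX, hY, if_true, if_false, one_mul, true_imp_iff, false_imp_iff, true_and]
            refine (colorM_some q α p (col e)).le.trans (ENNReal.ofReal_le_ofReal ?_)
            have : α (col e) ≤ 1 := by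
              rw [← hsum]
              exact Finset.single_le_sum (fun i _ => (hα i).le) (Finset.mem_univ _)
            nlinarith
          · simp only [hX, hY, if_false, mul_one]
            exact prob_le_one
    _ = _ := by
        rw [Finset.prod_mul_distrib]
        simp [Finset.prod_ite_mem]

def HallBad {n : ℕ} (H : Fin n → Fin n → Prop) (S T : Finset (Fin n)) : Prop :=
  (∀ a ∈ S, ∀ b, b ∉ T → ¬ H a b) ∧
    ∀ b ∈ T, ∃ a ∈ S, ∃ a' ∈ S, a ≠ a' ∧ H a b ∧ H a' b

open Classical in
noncomputable def nbr {n : ℕ} (H : Fin n → Fin n → Prop) (S : Finset (Fin n)) :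
    Finset (Fin n) := univ.filter fun b => ∃ a ∈ S, H a b

open Classical in
lemma hall_min {n : ℕ} (H : Fin n → Fin n → Prop) (S : Finset (Fin n))
    (hS : (nbr H S).card < S.card)
    (hmin : ∀ S' : Finset (Fin n), S'.card < S.card → S'.card ≤ (nbr H S').card ∧
      S'.card ≤ (nbr (fun b a => H a b) S').card) :
    S.card = (nbr H S).card + 1 ∧ 2 * S.card ≤ n + 1 ∧ HallBad H S (nbr H S) := by
  have hcard : S.card = (nbr H S).card + 1 := by
    obtain ⟨a, ha⟩ : S.Nonempty := by
      rw [← Finset.card_pos]; omega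
    have h1 := (hmin (S.erase a) (Finset.card_erase_lt_of_mem ha)).1
    have h2 : (nbr H (S.erase a)).card ≤ (nbr H S).card := by
      apply Finset.card_le_card
      intro b hb
      simp only [nbr, mem_filter, mem_univ, true_and, mem_erase] at hb ⊢
      obtain ⟨c, hc, h⟩ := hb
      exact ⟨c, hc.2, h⟩
    rw [Finset.card_erase_of_mem ha] at h1
    omega
  refine ⟨hcard, ?_, ?_, ?_⟩
  · by_contra hcon
    have hc1 : ((nbr H S)ᶜ).card = n - (nbr H S).card := by
      rw [Finset.card_compl, Fintype.card_fin]
    have hn : S.card ≤ n := by simpa using Finset.card_le_univ S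
    have h1 := (hmin ((nbr H S)ᶜ) (by omega)).2
    have h2 : (nbr (fun b a => H a b) (nbr H S)ᶜ).card ≤ (Sᶜ).card := by
      apply Finset.card_le_card
      intro a ha
      simp only [nbr, mem_filter, mem_univ, true_and, mem_compl] at ha ⊢
      obtain ⟨b, hb, h⟩ := ha
      exact fun haS => hb ⟨a, haS, h⟩
    rw [Finset.card_compl, Fintype.card_fin] at h2
    omega
  · intro a ha b hb h
    exact hb (by simp only [nbr, mem_filter, mem_univ, true_and]; exact ⟨a, ha, h⟩)
  · intro b hb
    have hb' := hb
    simp only [nbr, mem_filter, mem_univ, true_and] at hb'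
    obtain ⟨a, ha, hab⟩ := hb'
    by_contra hcon
    push Not at hcon
    have h1 := (hmin (S.erase a) (Finset.card_erase_lt_of_mem ha)).1
    have h2 : (nbr H (S.erase a)).card ≤ ((nbr H S).erase b).card := by
      apply Finset.card_le_card
      intro b' hb'
      simp only [nbr, mem_filter, mem_univ, true_and, mem_erase] at hb' ⊢
      obtain ⟨c, hc, h⟩ := hb'
      refine ⟨?_, c, hc.2, h⟩
      rintro rfl
      exact hcon a ha c hc.2 (Ne.symm hc.1) hab h
    have h3 : 0 < (nbr H S).card := Finset.card_pos.mpr ⟨b, hb⟩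
    rw [Finset.card_erase_of_mem ha] at h1
    rw [Finset.card_erase_of_mem hb] at h2
    omega

open Classical in
lemma hall_exists {n : ℕ} (H : Fin n → Fin n → Prop)
    (hno : ¬ ∃ σ : Equiv.Perm (Fin n), ∀ a, H a (σ a)) :
    ∃ S T : Finset (Fin n), S.card = T.card + 1 ∧ 2 * S.card ≤ n + 1 ∧
      (HallBad H S T ∨ HallBad (fun b a => H a b) S T) := by
  have hex : ∃ k, ∃ S : Finset (Fin n), S.card = k ∧
      ((nbr H S).card < S.card ∨ (nbr (fun b a => H a b) S).card < S.card) := by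
    by_contra hcon
    push Not at hcon
    apply hno
    have hh := (Finset.all_card_le_biUnion_card_iff_exists_injective
      (fun a => univ.filter fun b => H a b)).mp (by
        intro S
        refine (hcon _ S rfl).1.trans (Finset.card_le_card ?_)
        intro b hb
        simp only [nbr, mem_filter, mem_univ, true_and, mem_biUnion] at hb ⊢
        exact hb)
    obtain ⟨f, hf, hf2⟩ := hh
    refine ⟨Equiv.ofBijective f (Finite.injective_iff_bijective.mp hf), fun a => ?_⟩
    simpa using hf2 a
  obtain ⟨S, hSk, hS⟩ := Nat.find_spec hex
  have hmin : ∀ S' : Finset (Fin n), S'.card < S.card → S'.card ≤ (nbr H S').card ∧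
      S'.card ≤ (nbr (fun b a => H a b) S').card := by
    intro S' hS'
    have := Nat.find_min hex (m := S'.card) (by omega)
    push Not at this
    exact this S' rfl
  rcases hS with hS | hS
  · obtain ⟨h1, h2, h3⟩ := hall_min H S hS hmin
    exact ⟨S, _, h1, h2, Or.inl h3⟩
  · obtain ⟨h1, h2, h3⟩ := hall_min (fun b a => H a b) S hS (fun S' h => (hmin S' h).symm)
    exact ⟨S, _, h1, h2, Or.inr h3⟩

lemma badST (n q : ℕ) (α : Fin q → ℝ) (hα : ∀ i, 0 < α i) (hsum : ∑ i, α i = 1)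
    (p : ℝ) (hp0 : 0 ≤ p) (hp1 : p ≤ 1) (a0 : ℝ) (ha : ∀ i, a0 ≤ α i)
    (col : Fin n × Fin n → Fin q) (e : Fin n × Fin n ≃ Fin n × Fin n)
    (S T : Finset (Fin n)) (j : ℕ) (hT : T.card = j) (hS : S.card = j + 1) :
    graphM n q α p {f | HallBad (fun a b => f (e (a, b)) = some (col (e (a, b)))) S T} ≤
      ENNReal.ofReal (((j + 1 : ℝ) ^ 2) ^ j *
        (Real.exp (-(a0 * p)) ^ ((j + 1) * (n - j)) * p ^ (2 * j))) := by
  classical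
  let X : Finset (Fin n × Fin n) := S ×ˢ Tᶜ
  let Y : (T → S × S) → Finset (Fin n × Fin n) := fun g =>
    (univ.image fun b : T => (((g b).1 : Fin n), (b : Fin n))) ∪
      (univ.image fun b : T => (((g b).2 : Fin n), (b : Fin n)))
  have hXc : (X.map e.toEmbedding).card = (j + 1) * (n - j) := by
    simp [X, Finset.card_compl, hT, hS]
  have hYc : ∀ g : T → S × S, (∀ b, (g b).1 ≠ (g b).2) →
      ((Y g).map e.toEmbedding).card = 2 * j := by
    intro g hg
    rw [Finset.card_map, Finset.card_union_of_disjoint, Finset.card_image_of_injective,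
      Finset.card_image_of_injective]
    · simp [hT]; ring
    · intro b b' h
      exact Subtype.ext (Prod.ext_iff.mp h).2
    · intro b b' h
      exact Subtype.ext (Prod.ext_iff.mp h).2
    · rw [Finset.disjoint_left]
      intro x hx hx'
      simp only [mem_image, mem_univ, true_and] at hx hx'
      obtain ⟨b, rfl⟩ := hx
      obtain ⟨b', h⟩ := hx'
      have hb : b' = b := Subtype.ext (Prod.ext_iff.mp h).2
      subst hb
      exact hg _ (Subtype.ext (Prod.ext_iff.mp h).1.symm)
  have hd : ∀ g, Disjoint (X.map e.toEmbedding) ((Y g).map e.toEmbedding) := by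
    intro g
    rw [Finset.disjoint_map, Finset.disjoint_left]
    intro x hx hx'
    simp only [X, Y, mem_product, mem_compl, mem_union, mem_image, mem_univ, true_and] at hx hx'
    rcases hx' with ⟨b, rfl⟩ | ⟨b, rfl⟩
    · exact hx.2 b.2
    · exact hx.2 b.2
  let E : (T → S × S) → Set (Fin n × Fin n → Option (Fin q)) := fun g =>
    {f | (∀ b, (g b).1 ≠ (g b).2) ∧ ((∀ x ∈ X.map e.toEmbedding, f x ≠ some (col x)) ∧
      ∀ x ∈ (Y g).map e.toEmbedding, f x = some (col x))}
  have hsub : {f | HallBad (fun a b => f (e (a, b)) = some (col (e (a, b)))) S T} ⊆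
      ⋃ g ∈ (univ : Finset (T → S × S)), E g := by
    rintro f ⟨h1, h2⟩
    choose! g1 hg1 g2 hg2 hne hH1 hH2 using h2
    simp only [Set.mem_iUnion]
    refine ⟨fun b => (⟨g1 b, hg1 b b.2⟩, ⟨g2 b, hg2 b b.2⟩), mem_univ _, ?_, ?_, ?_⟩
    · intro b h
      exact hne b b.2 (Subtype.ext_iff.mp h)
    · intro x hx
      obtain ⟨⟨a, b⟩, hab, rfl⟩ := Finset.mem_map.mp hx
      simp only [X, mem_product, mem_compl] at hab
      exact h1 a hab.1 b hab.2
    · intro x hx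
      obtain ⟨⟨a, b⟩, hab, rfl⟩ := Finset.mem_map.mp hx
      simp only [Y, mem_union, mem_image, mem_univ, true_and, Prod.mk.injEq] at hab
      rcases hab with ⟨b', rfl, rfl⟩ | ⟨b', rfl, rfl⟩
      · exact hH1 _ b'.2
      · exact hH2 _ b'.2
  have hE : ∀ g ∈ (univ : Finset (T → S × S)), graphM n q α p (E g) ≤
      ENNReal.ofReal (Real.exp (-(a0 * p)) ^ ((j + 1) * (n - j)) * p ^ (2 * j)) := by
    intro g _
    by_cases hg : ∀ b, (g b).1 ≠ (g b).2
    · have h := cyl n q α hα hsum p hp0 hp1 a0 ha col _ _ (hd g)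
      rw [hXc, hYc g hg, ← ENNReal.ofReal_pow (Real.exp_pos _).le, ← ENNReal.ofReal_pow hp0,
        ← ENNReal.ofReal_mul (by positivity)] at h
      refine le_trans (measure_mono ?_) h
      intro f hf
      exact hf.2
    · have : E g = ∅ := by
        ext f
        simp only [Set.mem_empty_iff_false, iff_false]
        exact fun hf => hg hf.1
      rw [this]; simp
  refine (measure_mono hsub).trans ((measure_biUnion_finset_le _ _).trans
    ((Finset.sum_le_sum hE).trans ?_))
  rw [Finset.sum_const, nsmul_eq_mul, ENNReal.ofReal_mul (p := ((j + 1 : ℝ) ^ 2) ^ j) (by positivity)]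
  apply le_of_eq
  congr 1
  rw [Finset.card_univ, ← ENNReal.ofReal_natCast]
  congr 1
  simp [hT, hS, sq]

lemma failc (n q : ℕ) (α : Fin q → ℝ) (hα : ∀ i, 0 < α i) (hsum : ∑ i, α i = 1)
    (p : ℝ) (hp0 : 0 ≤ p) (hp1 : p ≤ 1) (a0 : ℝ) (ha : ∀ i, a0 ≤ α i)
    (c : Fin n → Fin q) :
    graphM n q α p {f | ¬ ∃ σ : Equiv.Perm (Fin n), ∀ a, f (a, σ a) = some (c a)} ≤
      ENNReal.ofReal (2 * ∑ j ∈ (range n).filter (fun j => 2 * j + 1 ≤ n),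
        (n.choose j : ℝ) * ((n.choose (j + 1) : ℝ) * (((j + 1 : ℝ) ^ 2) ^ j *
        (Real.exp (-(a0 * p)) ^ ((j + 1) * (n - j)) * p ^ (2 * j))))) := by
  let U : (Fin n × Fin n ≃ Fin n × Fin n) → Set (Fin n × Fin n → Option (Fin q)) := fun e =>
    ⋃ j ∈ (range n).filter (fun j => 2 * j + 1 ≤ n),
      ⋃ T ∈ powersetCard j (univ : Finset (Fin n)),
      ⋃ S ∈ powersetCard (j + 1) (univ : Finset (Fin n)),
      {f | HallBad (fun a b => f (e (a, b)) = some (c (e (a, b)).1)) S T}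
  have hU : ∀ e, graphM n q α p (U e) ≤
      ENNReal.ofReal (∑ j ∈ (range n).filter (fun j => 2 * j + 1 ≤ n),
        (n.choose j : ℝ) * ((n.choose (j + 1) : ℝ) * (((j + 1 : ℝ) ^ 2) ^ j *
        (Real.exp (-(a0 * p)) ^ ((j + 1) * (n - j)) * p ^ (2 * j))))) := by
    intro e
    rw [ENNReal.ofReal_sum_of_nonneg (fun j _ => by positivity)]
    refine (measure_biUnion_finset_le _ _).trans (Finset.sum_le_sum fun j _ => ?_)
    rw [ENNReal.ofReal_mul (by positivity), ENNReal.ofReal_mul (by positivity)]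
    refine (measure_biUnion_finset_le _ _).trans ?_
    refine (Finset.sum_le_card_nsmul _ _ (ENNReal.ofReal (n.choose (j + 1) : ℝ) *
      ENNReal.ofReal (((j + 1 : ℝ) ^ 2) ^ j *
        (Real.exp (-(a0 * p)) ^ ((j + 1) * (n - j)) * p ^ (2 * j)))) ?_).trans ?_
    · intro T hT
      refine (measure_biUnion_finset_le _ _).trans ?_
      refine (Finset.sum_le_card_nsmul _ _ _ (fun S hS =>
        badST n q α hα hsum p hp0 hp1 a0 ha (fun x => c x.1) e S T j
          (mem_powersetCard.mp hT).2 (mem_powersetCard.mp hS).2)).trans ?_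
      simp [Finset.card_powersetCard]
    · simp [Finset.card_powersetCard]
  have hsub : {f : Fin n × Fin n → Option (Fin q) |
      ¬ ∃ σ : Equiv.Perm (Fin n), ∀ a, f (a, σ a) = some (c a)} ⊆
      U (Equiv.refl _) ∪ U (Equiv.prodComm _ _) := by
    intro f hf
    obtain ⟨S, T, h1, h2, h3⟩ := hall_exists (fun a b => f (a, b) = some (c a)) hf
    rcases h3 with h3 | h3
    · left
      simp only [U, Set.mem_iUnion]
      exact ⟨T.card, by simp only [mem_filter, mem_range]; omega, T, by simp, S, by simp [h1], h3⟩
    · right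
      simp only [U, Set.mem_iUnion]
      exact ⟨T.card, by simp only [mem_filter, mem_range]; omega, T, by simp, S, by simp [h1], h3⟩
  refine (measure_mono hsub).trans ((measure_union_le _ _).trans
    ((add_le_add (hU _) (hU _)).trans ?_))
  rw [← ENNReal.ofReal_add (Finset.sum_nonneg fun j _ => by positivity)
    (Finset.sum_nonneg fun j _ => by positivity), two_mul]

lemma profiles_card (n r : ℕ) :
    ∃ P : Finset (Fin (r + 1) → ℕ), P.card ≤ (n + 1) ^ r ∧ ∀ m, ∑ i, m i = n → m ∈ P := by
  classical
  let φ : (Fin r → Fin (n + 1)) → (Fin (r + 1) → ℕ) := fun g =>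
    Fin.cons (n - ∑ i, (g i : ℕ)) (fun i => (g i : ℕ))
  refine ⟨univ.image φ, ?_, ?_⟩
  · refine Finset.card_image_le.trans ?_
    simp
  · intro m hm
    have hle : ∀ i, m i ≤ n := fun i => by
      rw [← hm]; exact Finset.single_le_sum (fun _ _ => Nat.zero_le _) (mem_univ i)
    refine mem_image.mpr ⟨fun i => ⟨m i.succ, Nat.lt_succ_of_le (hle _)⟩, mem_univ _, ?_⟩
    rw [Fin.sum_univ_succ] at hm
    funext i
    refine Fin.cases ?_ (fun i => ?_) i
    · simp only [φ, Fin.cons_zero]; omega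
    · simp [φ]

lemma coloring_exists (n q : ℕ) (m : Fin q → ℕ) (hm : ∑ i, m i = n) :
    ∃ c : Fin n → Fin q, ∀ i, (univ.filter fun a => c a = i).card = m i := by
  have e : Fin n ≃ (Σ i, Fin (m i)) := Fintype.equivOfCardEq (by simp [hm])
  refine ⟨fun a => (e a).1, fun i => ?_⟩
  rw [← Fintype.card_subtype]
  rw [Fintype.card_congr (e.subtypeEquiv (p := fun a => (e a).1 = i) (q := fun x => x.1 = i)
    (fun a => Iff.rfl))]
  rw [Fintype.card_congr (Equiv.sigmaSubtype (β := fun i => Fin (m i)) i)]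
  simp

/-- The single real-variable estimate. -/
lemma term_bound (n q j : ℕ) (hn : 3 ≤ n) (hj : 2 * j + 1 ≤ n) (hq : 1 ≤ q) (a0 p w x : ℝ)
    (ha0 : 0 < a0) (hx : x = n * (a0 * p)) (hxw : q * (Real.log n + w) ≤ x)
    (hxa : a0 ≤ x)
    (hθ : Real.exp 2 * (x / a0) ^ 2 * Real.exp (-(x / 6)) ≤ 1 / 2) :
    (n : ℝ) ^ (q - 1) * ((n.choose j : ℝ) * ((n.choose (j + 1) : ℝ) * (((j + 1 : ℝ) ^ 2) ^ j *
        (Real.exp (-(a0 * p)) ^ ((j + 1) * (n - j)) * p ^ (2 * j))))) ≤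
      Real.exp (-(q * w)) * Real.exp 2 * (1 / 2) ^ j := by
  have hnpos : (0 : ℝ) < n := by positivity
  have hp : p = x / (a0 * n) := by rw [hx]; field_simp
  have hxpos : 0 < x := by linarith
  set y := x / a0 with hy
  have hy1 : 1 ≤ y := by rw [hy, le_div_iff₀ ha0]; linarith
  have hpy : p = y / n := by rw [hp, hy]; field_simp
  -- binomials
  have hkk : ((j + 1 : ℕ) : ℝ) ^ (j + 1) / ((j + 1).factorial : ℝ) ≤ Real.exp (j + 1) := by
    have := Real.pow_div_factorial_le_exp (x := ((j + 1 : ℕ) : ℝ)) (by positivity) (j + 1)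
    push_cast at this ⊢
    exact this
  have hc1 : (n.choose j : ℝ) ≤ n ^ j / j.factorial := Nat.choose_le_pow_div j n
  have hc2 : (n.choose (j + 1) : ℝ) ≤ n ^ (j + 1) / (j + 1).factorial :=
    Nat.choose_le_pow_div (j + 1) n
  have hcomb : (n.choose j : ℝ) * ((n.choose (j + 1) : ℝ) * ((j + 1 : ℝ) ^ 2) ^ j) ≤
      n ^ (2 * j + 1) * Real.exp (j + 1) ^ 2 := by
    have hb : (n ^ j / j.factorial : ℝ) * ((n ^ (j + 1) / (j + 1).factorial : ℝ) *
        ((j + 1 : ℝ) ^ 2) ^ j) = n ^ (2 * j + 1) *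
        ((((j + 1 : ℕ) : ℝ) ^ (j + 1) / ((j + 1).factorial : ℝ)) ^ 2 / (j + 1)) := by
      rw [Nat.factorial_succ]
      have : (j.factorial : ℝ) ≠ 0 := by positivity
      have : (j + 1 : ℝ) ≠ 0 := by positivity
      push_cast
      rw [← pow_mul]
      field_simp
      ring
    calc _ ≤ (n ^ j / j.factorial : ℝ) * ((n ^ (j + 1) / (j + 1).factorial : ℝ) *
        ((j + 1 : ℝ) ^ 2) ^ j) := by gcongr
      _ = _ := hb
      _ ≤ n ^ (2 * j + 1) * (Real.exp (j + 1) ^ 2) := by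
        gcongr
        calc _ ≤ (((j + 1 : ℕ) : ℝ) ^ (j + 1) / ((j + 1).factorial : ℝ)) ^ 2 := by
              apply div_le_self (by positivity)
              have : (0 : ℝ) ≤ j := by positivity
              linarith
          _ ≤ _ := by gcongr
  -- powers of n
  have hnq : (n : ℝ) ^ q ≤ Real.exp (x - q * w) := by
    have h : (n : ℝ) ^ q = Real.exp (q * Real.log n) := by
      rw [Real.exp_nat_mul, Real.exp_log hnpos]
    rw [h, Real.exp_le_exp]
    linarith
  -- exponent
  have hnj : ((n - j : ℕ) : ℝ) = n - j := by
    rw [Nat.cast_sub (by omega)]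
  have hjn : 2 * (j : ℝ) + 1 ≤ n := by exact_mod_cast hj
  have hn3 : (3 : ℝ) ≤ n := by exact_mod_cast hn
  have hexpo : Real.exp (-(a0 * p)) ^ ((j + 1) * (n - j)) =
      Real.exp (-(x * ((j + 1) * (n - j) / n))) := by
    rw [← Real.exp_nat_mul]
    push_cast
    rw [hnj, hp]
    congr 1
    field_simp
  have hmain : (n : ℝ) ^ (q - 1) * ((n.choose j : ℝ) * ((n.choose (j + 1) : ℝ) *
      (((j + 1 : ℝ) ^ 2) ^ j *
        (Real.exp (-(a0 * p)) ^ ((j + 1) * (n - j)) * p ^ (2 * j))))) ≤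
      Real.exp (x - q * w) * (Real.exp (j + 1) ^ 2 * y ^ (2 * j) *
        Real.exp (-(x * ((j + 1) * (n - j) / n)))) := by
    rw [hexpo]
    calc _ = (n : ℝ) ^ (q - 1) * ((n.choose j : ℝ) * ((n.choose (j + 1) : ℝ) *
          ((j + 1 : ℝ) ^ 2) ^ j)) * (p ^ (2 * j) *
          Real.exp (-(x * ((j + 1) * (n - j) / n)))) := by ring
      _ ≤ (n : ℝ) ^ (q - 1) * (n ^ (2 * j + 1) * Real.exp (j + 1) ^ 2) * (p ^ (2 * j) *
          Real.exp (-(x * ((j + 1) * (n - j) / n)))) := by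
        have : 0 ≤ p := by rw [hpy]; positivity
        gcongr
      _ = (n : ℝ) ^ q * (Real.exp (j + 1) ^ 2 * y ^ (2 * j) *
        Real.exp (-(x * ((j + 1) * (n - j) / n)))) := by
        obtain ⟨r, rfl⟩ : ∃ r, q = r + 1 := ⟨q - 1, by omega⟩
        rw [hpy, div_pow, Nat.add_sub_cancel, pow_succ (n : ℝ) r, pow_succ (n : ℝ) (2 * j)]
        field_simp
      _ ≤ _ := by gcongr
  refine hmain.trans ?_
  rcases Nat.eq_zero_or_pos j with rfl | hjpos
  · apply le_of_eq
    simp only [Nat.cast_zero, zero_add, mul_zero, pow_zero, mul_one, sub_zero, one_mul]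
    rw [div_self hnpos.ne', mul_one, ← Real.exp_nat_mul, ← Real.exp_add, ← Real.exp_add,
      ← Real.exp_add]
    congr 1
    push_cast
    ring
  · have hj1 : (1 : ℝ) ≤ j := by exact_mod_cast hjpos
    have hfrac : 1 + (j + 1 : ℝ) / 6 ≤ (j + 1) * (n - j) / n := by
      rw [le_div_iff₀ hnpos]
      rcases Nat.lt_or_ge j 2 with h | h
      · have : j = 1 := by omega
        subst this
        push_cast
        linarith
      · have hj2 : (2 : ℝ) ≤ j := by exact_mod_cast h
        nlinarith
    have hy2 : y ^ (2 * j) ≤ (y ^ 2) ^ (j + 1) := by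
      rw [← pow_mul]
      exact pow_le_pow_right₀ hy1 (by omega)
    calc _ ≤ Real.exp (x - q * w) * (Real.exp (j + 1) ^ 2 * (y ^ 2) ^ (j + 1) *
        Real.exp (-(x * (1 + (j + 1 : ℝ) / 6)))) := by
          gcongr
      _ = Real.exp (-(q * w)) * (Real.exp 2 * y ^ 2 * Real.exp (-(x / 6))) ^ (j + 1) := by
        rw [mul_pow, mul_pow, ← Real.exp_nat_mul, ← Real.exp_nat_mul, ← Real.exp_nat_mul]
        have h1 : Real.exp (x - q * w) = Real.exp x * Real.exp (-(q * w)) := by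
          rw [← Real.exp_add]; congr 1
        have h2 : Real.exp (-(x * (1 + (j + 1 : ℝ) / 6))) =
            Real.exp (-x) * Real.exp (((j + 1 : ℕ) : ℝ) * (-(x / 6))) := by
          rw [← Real.exp_add]; congr 1; push_cast; ring
        have h3 : Real.exp x * Real.exp (-x) = 1 := by rw [← Real.exp_add]; simp
        have h4 : Real.exp (((2 : ℕ) : ℝ) * (j + 1)) = Real.exp (((j + 1 : ℕ) : ℝ) * 2) := by
          congr 1; push_cast; ring
        rw [h1, h2, h4]
        linear_combination (Real.exp (-(q * w)) * Real.exp (((j + 1 : ℕ) : ℝ) * 2) *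
          (y ^ 2) ^ (j + 1) * Real.exp (((j + 1 : ℕ) : ℝ) * (-(x / 6)))) * h3
      _ ≤ Real.exp (-(q * w)) * (1 / 2) ^ (j + 1) := by gcongr
      _ ≤ Real.exp (-(q * w)) * Real.exp 2 * (1 / 2) ^ j := by
        rw [mul_assoc]
        gcongr
        rw [pow_succ]
        have h1 : (1 : ℝ) ≤ Real.exp 2 := Real.one_le_exp (by norm_num)
        have h2 : (0 : ℝ) < (1 / 2) ^ j := by positivity
        nlinarith

lemma theta_small (a0 : ℝ) :
    ∀ᶠ x : ℝ in atTop, Real.exp 2 * (x / a0) ^ 2 * Real.exp (-(x / 6)) ≤ 1 / 2 := by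
  have h1 : Tendsto (fun x : ℝ => (x / 6) ^ 2 * Real.exp (-(x / 6))) atTop (nhds 0) :=
    (Real.tendsto_pow_mul_exp_neg_atTop_nhds_zero 2).comp
      (tendsto_id.atTop_div_const (by norm_num : (0 : ℝ) < 6))
  have h2 := h1.const_mul (Real.exp 2 * (6 / a0) ^ 2)
  rw [mul_zero] at h2
  filter_upwards [h2.eventually_le_const (by norm_num : (0 : ℝ) < 1 / 2)] with x hx
  refine le_trans (le_of_eq ?_) hx
  have : x / a0 = (6 / a0) * (x / 6) := by ring
  rw [this]
  ring

lemma per_n (n q : ℕ) (hn : 3 ≤ n) (hq : 1 ≤ q) (α : Fin q → ℝ) (hα : ∀ i, 0 < α i)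
    (hsum : ∑ i, α i = 1)
    (p : ℝ) (hp0 : 0 ≤ p) (hp1 : p ≤ 1) (a0 : ℝ) (ha : ∀ i, a0 ≤ α i) (ha0 : 0 < a0)
    (w : ℝ) (hxw : q * (Real.log n + w) ≤ n * (a0 * p)) (hxa : a0 ≤ n * (a0 * p))
    (hθ : Real.exp 2 * (n * (a0 * p) / a0) ^ 2 * Real.exp (-(n * (a0 * p) / 6)) ≤ 1 / 2) :
    1 - ENNReal.ofReal (2 ^ (q - 1) * (4 * Real.exp 2 * Real.exp (-(q * w)))) ≤
      graphM n q α p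
        {f | ∀ m : Fin q → ℕ, (∑ i, m i) = n →
          ∃ σ : Equiv.Perm (Fin n), (∀ a, f (a, σ a) ≠ none) ∧
            ∀ i, (univ.filter fun a => f (a, σ a) = some i).card = m i} := by
  set Good := {f : Fin n × Fin n → Option (Fin q) | ∀ m : Fin q → ℕ, (∑ i, m i) = n →
          ∃ σ : Equiv.Perm (Fin n), (∀ a, f (a, σ a) ≠ none) ∧
            ∀ i, (univ.filter fun a => f (a, σ a) = some i).card = m i} with hGood
  have := colorM_prob q α hα hsum p hp0 hp1
  have : IsProbabilityMeasure (graphM n q α p) := by unfold graphM; infer_instance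
  obtain ⟨P, hPc, hP⟩ : ∃ P : Finset (Fin q → ℕ), P.card ≤ (n + 1) ^ (q - 1) ∧
      ∀ m, ∑ i, m i = n → m ∈ P := by
    obtain ⟨r, rfl⟩ : ∃ r, q = r + 1 := ⟨q - 1, by omega⟩
    exact profiles_card n r
  have hcol : ∀ m : Fin q → ℕ, ∃ c : Fin n → Fin q, (∑ i, m i) = n →
      ∀ i, (univ.filter fun a => c a = i).card = m i := by
    intro m
    by_cases hm : (∑ i, m i) = n
    · obtain ⟨c, hc⟩ := coloring_exists n q m hm
      exact ⟨c, fun _ => hc⟩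
    · exact ⟨fun _ => ⟨0, by omega⟩, fun h => absurd h hm⟩
  choose c hc using hcol
  have hsub : Goodᶜ ⊆ ⋃ m ∈ P, {f : Fin n × Fin n → Option (Fin q) |
      ¬ ∃ σ : Equiv.Perm (Fin n), ∀ a, f (a, σ a) = some (c m a)} := by
    intro f hf
    by_contra hcon
    apply hf
    intro m hm
    simp only [Set.mem_iUnion, not_exists] at hcon
    have h := hcon m (hP m hm)
    have h' : ∃ σ : Equiv.Perm (Fin n), ∀ a, f (a, σ a) = some (c m a) := by
      by_contra h2
      exact h (not_exists.mp h2)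
    obtain ⟨σ, hσ⟩ := h'
    refine ⟨σ, fun a => by simp [hσ], fun i => ?_⟩
    rw [← hc m hm i]
    simp [hσ]
  set F : ℝ := ∑ j ∈ (range n).filter (fun j => 2 * j + 1 ≤ n),
        (n.choose j : ℝ) * ((n.choose (j + 1) : ℝ) * (((j + 1 : ℝ) ^ 2) ^ j *
        (Real.exp (-(a0 * p)) ^ ((j + 1) * (n - j)) * p ^ (2 * j)))) with hF
  have hF0 : 0 ≤ F := Finset.sum_nonneg fun j _ => by positivity
  have hFb : (n : ℝ) ^ (q - 1) * F ≤ 2 * Real.exp 2 * Real.exp (-(q * w)) := by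
    rw [hF, Finset.mul_sum]
    calc _ ≤ ∑ j ∈ (range n).filter (fun j => 2 * j + 1 ≤ n),
          Real.exp (-(q * w)) * Real.exp 2 * (1 / 2) ^ j := by
          apply Finset.sum_le_sum
          intro j hj
          exact term_bound n q j hn (mem_filter.mp hj).2 hq a0 p w _ ha0 rfl hxw hxa hθ
      _ ≤ ∑ j ∈ range n, Real.exp (-(q * w)) * Real.exp 2 * (1 / 2) ^ j :=
          Finset.sum_le_sum_of_subset_of_nonneg (Finset.filter_subset _ _)
            (fun _ _ _ => by positivity)
      _ = Real.exp (-(q * w)) * Real.exp 2 * ∑ j ∈ range n, (1 / 2 : ℝ) ^ j := by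
          rw [Finset.mul_sum]
      _ ≤ Real.exp (-(q * w)) * Real.exp 2 * 2 := by
          gcongr
          exact sum_geometric_two_le n
      _ = _ := by ring
  have hbad : graphM n q α p Goodᶜ ≤
      ENNReal.ofReal (2 ^ (q - 1) * (4 * Real.exp 2 * Real.exp (-(q * w)))) := by
    refine (measure_mono hsub).trans ((measure_biUnion_finset_le _ _).trans
      ((Finset.sum_le_card_nsmul _ _ _ (fun m _ =>
        failc n q α hα hsum p hp0 hp1 a0 ha (c m))).trans ?_))
    rw [nsmul_eq_mul, ← ENNReal.ofReal_natCast, ← ENNReal.ofReal_mul (by positivity)]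
    apply ENNReal.ofReal_le_ofReal
    have hcard : (P.card : ℝ) ≤ 2 ^ (q - 1) * (n : ℝ) ^ (q - 1) := by
      rw [← mul_pow]
      calc (P.card : ℝ) ≤ ((n : ℝ) + 1) ^ (q - 1) := by exact_mod_cast hPc
        _ ≤ _ := by
          have : (3 : ℝ) ≤ n := by exact_mod_cast hn
          gcongr
          linarith
    calc _ ≤ (2 ^ (q - 1) * (n : ℝ) ^ (q - 1)) * (2 * F) := by gcongr
      _ = 2 ^ (q - 1) * (2 * ((n : ℝ) ^ (q - 1) * F)) := by ring
      _ ≤ 2 ^ (q - 1) * (2 * (2 * Real.exp 2 * Real.exp (-(q * w)))) := by gcongr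
      _ = _ := by ring
  rw [tsub_le_iff_right]
  calc (1 : ENNReal) = graphM n q α p Set.univ := measure_univ.symm
    _ = graphM n q α p (Good ∪ Goodᶜ) := by rw [Set.union_compl_self]
    _ ≤ graphM n q α p Good + graphM n q α p Goodᶜ := measure_union_le _ _
    _ ≤ _ := by gcongr

/-- if `q(log n + ω(n))/(α_min n) ≤ p(n) ≤ 1` with `ω(n) → ∞`, then w.h.p. the
perfect matching color profile consists of all vectors `(m₁,…,m_q)` with `∑ mᵢ = n`. -/
theorem full_color_profile (q : ℕ) (hq : 1 ≤ q) (α : Fin q → ℝ)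
    (hα : ∀ i, 0 < α i) (hsum : ∑ i, α i = 1)
    (w : ℕ → ℝ) (hw : Tendsto w atTop atTop)
    (p : ℕ → ℝ)
    (hp : ∀ n : ℕ,
      (q : ℝ) * (Real.log n + w n) /
          ((Finset.univ.inf' ⟨⟨0, by omega⟩, Finset.mem_univ _⟩ α) * n) ≤ p n ∧ p n ≤ 1) :
    Tendsto (fun n =>
      graphM n q α (p n)
        {f | ∀ m : Fin q → ℕ, (∑ i, m i) = n →
          ∃ σ : Equiv.Perm (Fin n), (∀ a, f (a, σ a) ≠ none) ∧
            ∀ i, (univ.filter fun a => f (a, σ a) = some i).card = m i})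
      atTop (nhds 1) := by
  have hne : (univ : Finset (Fin q)).Nonempty := ⟨⟨0, by omega⟩, Finset.mem_univ _⟩
  set a0 : ℝ := Finset.univ.inf' ⟨⟨0, by omega⟩, Finset.mem_univ _⟩ α with ha0def
  have ha0 : 0 < a0 := (Finset.lt_inf'_iff _).mpr fun i _ => hα i
  have ha : ∀ i, a0 ≤ α i := fun i => Finset.inf'_le _ (mem_univ i)
  obtain ⟨x0, hx0⟩ := Filter.eventually_atTop.mp (theta_small a0)
  have hb : Tendsto (fun n => 1 - ENNReal.ofReal
      (2 ^ (q - 1) * (4 * Real.exp 2 * Real.exp (-(q * w n))))) atTop (nhds 1) := by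
    have hq0 : (0 : ℝ) < q := by exact_mod_cast hq
    have h1 : Tendsto (fun n => Real.exp (-(q * w n))) atTop (nhds 0) :=
      Real.tendsto_exp_neg_atTop_nhds_zero.comp (hw.const_mul_atTop hq0)
    have h2 : Tendsto (fun n => (2 : ℝ) ^ (q - 1) * (4 * Real.exp 2 * Real.exp (-(q * w n))))
        atTop (nhds 0) := by
      simpa using (h1.const_mul (4 * Real.exp 2)).const_mul ((2 : ℝ) ^ (q - 1))
    have h3 := ENNReal.tendsto_ofReal h2
    rw [ENNReal.ofReal_zero] at h3
    simpa using ENNReal.Tendsto.sub (tendsto_const_nhds (x := (1 : ENNReal))) h3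
      (Or.inl ENNReal.one_ne_top)
  have hev : ∀ᶠ n : ℕ in atTop, 3 ≤ n ∧ a0 ≤ n * (a0 * p n) ∧
      q * (Real.log n + w n) ≤ n * (a0 * p n) ∧ x0 ≤ n * (a0 * p n) := by
    filter_upwards [eventually_ge_atTop 3, hw.eventually_ge_atTop 0,
      hw.eventually_ge_atTop a0, hw.eventually_ge_atTop x0] with n hn hw0 hwa hwx
    have hn0 : (0 : ℝ) < n := by positivity
    have h1 := (hp n).1
    rw [div_le_iff₀ (by positivity)] at h1
    have h2 : q * (Real.log n + w n) ≤ n * (a0 * p n) := by linarith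
    have h3 : w n ≤ n * (a0 * p n) := by
      have hl : 0 ≤ Real.log n := Real.log_nonneg (by exact_mod_cast (by omega : 1 ≤ n))
      have hq1 : (1 : ℝ) ≤ q := by exact_mod_cast hq
      nlinarith
    exact ⟨hn, by linarith, h2, by linarith⟩
  have hp0 : ∀ n : ℕ, a0 ≤ n * (a0 * p n) → 0 ≤ p n := by
    intro n h
    by_contra hc
    push Not at hc
    have : (n : ℝ) * (a0 * p n) ≤ 0 :=
      mul_nonpos_of_nonneg_of_nonpos (by positivity) (mul_nonpos_of_nonneg_of_nonpos ha0.le hc.le)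
    linarith
  refine tendsto_of_tendsto_of_tendsto_of_le_of_le' hb tendsto_const_nhds ?_ ?_
  · filter_upwards [hev] with n ⟨hn, hxa, hxw, hx⟩
    exact per_n n q hn hq α hα hsum (p n) (hp0 n hxa) (hp n).2 a0 ha ha0 (w n) hxw hxa (hx0 _ hx)
  · filter_upwards [hev] with n ⟨hn, hxa, hxw, hx⟩
    have := colorM_prob q α hα hsum (p n) (hp0 n hxa) (hp n).2
    have : IsProbabilityMeasure (graphM n q α (p n)) := by unfold graphM; infer_instance
    exact prob_le_one
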